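/- The split-statistic universal confidence set is finite-sample valid: for every n ∈ ℕ and every significance level a ∈ (0,1), Pr_{θ*}(θ* ∈ C_n^a) ≥ 1 − a, where C_n^a = {θ ∈ Θ : U_{α,β,n}^0(θ) ≤ 1/a}. -/

import Mathlib

open MeasureTheory ENNReal
open scoped BigOperators Classical

noncomputable section

/-- Division in `ℝ≥0∞` with the convention that the ratio is `0` when the
denominator is `0`. -/
def safeDiv (a b : ℝ≥0∞) : ℝ≥0∞ := if b = 0 then 0 else a / b

variable {d : ℕ} {π : Fin d → Type*} [∀ i, MeasurableSpace (π i)]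

/-- The marginal density on the coordinates in `S`, obtained by integrating a density
out over the coordinates in `[d] \ S` (as a function of the full vector, depending only
on the coordinates in `S`). -/
def marginal (μ : ∀ i, Measure (π i)) (S : Finset (Fin d))
    (f : (∀ i, π i) → ℝ≥0∞) : (∀ i, π i) → ℝ≥0∞ :=
  MeasureTheory.lmarginal μ Sᶜ f

/-- The conditional density of the coordinates in `T1` given the coordinates in `T2`,
with the convention that the ratio is `0` when the denominator is `0`. -/
def condDens (μ : ∀ i, Measure (π i)) (T1 T2 : Finset (Fin d))
    (f : (∀ i, π i) → ℝ≥0∞) (x : ∀ i, π i) : ℝ≥0∞ :=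
  safeDiv (marginal μ (T1 ∪ T2) f x) (marginal μ T2 f x)

/-- `𝕊_d`: the nonempty subsets of `[d]`. -/
abbrev Sd (d : ℕ) := {S : Finset (Fin d) // S.Nonempty}

/-- `𝕋_d`: ordered pairs of disjoint nonempty subsets of `[d]`. -/
abbrev Td (d : ℕ) := {T : Finset (Fin d) × Finset (Fin d) //
  T.1.Nonempty ∧ T.2.Nonempty ∧ Disjoint T.1 T.2}

/-- The individual composite likelihood
`p_{α,β}(x;θ) = ∏_S p_S(x_S;θ)^(α_S/γ) ∏_T p(x_{T←}|x_{T→};θ)^(β_T/γ)`,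
where `f = p(·;θ)` is the joint density. -/
def compLik (μ : ∀ i, Measure (π i)) (α : Sd d → ℝ) (β : Td d → ℝ) (γ : ℝ)
    (f : (∀ i, π i) → ℝ≥0∞) (x : ∀ i, π i) : ℝ≥0∞ :=
  (∏ S : Sd d, marginal μ S.1 f x ^ (α S / γ)) *
  (∏ T : Td d, condDens μ T.1.1 T.1.2 f x ^ (β T / γ))



section helpers

lemma sd_mul_le (a b : ℝ≥0∞) : safeDiv a b * b ≤ a := by
  unfold safeDiv
  split_ifs with h
  · simp
  · rw [mul_comm]; exact ENNReal.mul_div_le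

lemma sd_top (a : ℝ≥0∞) : safeDiv a ∞ = 0 := by simp [safeDiv]

lemma sd_mul (a b a' b' : ℝ≥0∞) :
    safeDiv (a * a') (b * b') ≤ safeDiv a b * safeDiv a' b' := by
  by_cases h : b * b' = 0
  · simp [safeDiv, h]
  have hb : b ≠ 0 := left_ne_zero_of_mul h
  have hb' : b' ≠ 0 := right_ne_zero_of_mul h
  by_cases ht : b = ∞
  · rw [ht, ENNReal.top_mul hb', sd_top]; exact zero_le
  by_cases ht' : b' = ∞
  · rw [ht', ENNReal.mul_top hb, sd_top]; exact zero_le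
  simp only [safeDiv, hb, hb', h, if_false]
  rw [ENNReal.mul_div_mul_comm (Or.inl hb) (Or.inl ht)]

lemma sd_prod {ι : Type*} (s : Finset ι) (a b : ι → ℝ≥0∞) :
    safeDiv (∏ i ∈ s, a i) (∏ i ∈ s, b i) ≤ ∏ i ∈ s, safeDiv (a i) (b i) := by
  induction s using Finset.induction_on with
  | empty => simp [safeDiv]
  | insert i s hi ih =>
    rw [Finset.prod_insert hi, Finset.prod_insert hi, Finset.prod_insert hi]
    exact (sd_mul _ _ _ _).trans (mul_le_mul_right ih _)

lemma sd_rpow (a b : ℝ≥0∞) {w : ℝ} (hw : 0 ≤ w) :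
    safeDiv (a ^ w) (b ^ w) ≤ safeDiv a b ^ w := by
  rcases hw.eq_or_lt with rfl | hw
  · simp [safeDiv]
  by_cases hb : b = 0
  · simp [hb, safeDiv, hw]
  by_cases ht : b = ∞
  · rw [ht, ENNReal.top_rpow_of_pos hw, sd_top]; exact zero_le
  have : b ^ w ≠ 0 := by
    simp [ENNReal.rpow_eq_zero_iff, hb, ht]
  simp only [safeDiv, hb, this, if_false]
  rw [ENNReal.div_rpow_of_nonneg _ _ hw.le]

lemma sd_measurable {X : Type*} [MeasurableSpace X] {f g : X → ℝ≥0∞}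
    (hf : Measurable f) (hg : Measurable g) : Measurable fun x => safeDiv (f x) (g x) := by
  unfold safeDiv
  exact Measurable.ite (hg (measurableSet_singleton 0)) measurable_const (hf.div hg)

lemma sd_cond (r g h : ℝ≥0∞) : safeDiv r (safeDiv g h) * g ≤ r * h := by
  by_cases h0 : h = 0
  · simp [safeDiv, h0]
  by_cases ht : h = ∞
  · rw [ht, sd_top]; simp [safeDiv]
  have : g = safeDiv g h * h := by
    simp [safeDiv, h0, ENNReal.div_mul_cancel h0 ht]
  calc _ = safeDiv r (safeDiv g h) * (safeDiv g h * h) := by rw [← this]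
    _ = safeDiv r (safeDiv g h) * safeDiv g h * h := by ring
    _ ≤ _ := mul_le_mul_left (sd_mul_le _ _) _

variable (μ : ∀ i, Measure (π i)) [∀ i, SigmaFinite (μ i)]

lemma lm_const_mul (s : Finset (Fin d)) (F g : (∀ i, π i) → ℝ≥0∞) (hg : Measurable g)
    (hF : ∀ x y, (∀ i ∉ s, x i = y i) → F x = F y) :
    lmarginal μ s (fun x => F x * g x) = fun x => F x * lmarginal μ s g x := by
  funext x
  unfold lmarginal
  have hm : Measurable fun y : (∀ i : s, π i) => g (Function.updateFinset x s y) :=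
    hg.comp measurable_updateFinset
  rw [← lintegral_const_mul _ hm]
  refine lintegral_congr fun y => ?_
  show F (Function.updateFinset x s y) * g (Function.updateFinset x s y) = _
  rw [hF (Function.updateFinset x s y) x]
  intro i hi
  simp [Function.updateFinset, hi]

lemma marginal_congr (S : Finset (Fin d)) (f : (∀ i, π i) → ℝ≥0∞) {x y : ∀ i, π i}
    (h : ∀ i ∈ S, x i = y i) : marginal μ S f x = marginal μ S f y :=
  lmarginal_congr μ f fun i hi => h i (by simpa using hi)

lemma marginal_meas (S : Finset (Fin d)) {f : (∀ i, π i) → ℝ≥0∞} (hf : Measurable f) :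
    Measurable (marginal μ S f) := hf.lmarginal μ

lemma condDens_meas (C D : Finset (Fin d)) {f : (∀ i, π i) → ℝ≥0∞} (hf : Measurable f) :
    Measurable (condDens μ C D f) :=
  sd_measurable (marginal_meas μ _ hf) (marginal_meas μ _ hf)

lemma condDens_congr (C D : Finset (Fin d)) (f : (∀ i, π i) → ℝ≥0∞) {x y : ∀ i, π i}
    (h : ∀ i ∈ C ∪ D, x i = y i) : condDens μ C D f x = condDens μ C D f y := by
  unfold condDens
  rw [marginal_congr μ _ f h, marginal_congr μ D f fun i hi => h i (Finset.mem_union_right _ hi)]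

lemma int_marg (S : Finset (Fin d)) {f g : (∀ i, π i) → ℝ≥0∞} (hf : Measurable f)
    (hg : Measurable g) :
    ∫⁻ x, safeDiv (marginal μ S f x) (marginal μ S g x) * g x ∂(Measure.pi μ)
      ≤ ∫⁻ x, f x ∂(Measure.pi μ) := by
  refine lintegral_le_of_lmarginal_le Sᶜ
    ((sd_measurable (marginal_meas μ S hf) (marginal_meas μ S hg)).mul hg) hf ?_
  rw [lm_const_mul μ Sᶜ _ g hg]
  · intro x
    exact sd_mul_le _ _
  · intro x y h
    have h' : ∀ i ∈ S, x i = y i := fun i hi => h i (by simpa using hi)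
    rw [marginal_congr μ S f h', marginal_congr μ S g h']

lemma int_cond (C D : Finset (Fin d)) (hCD : Disjoint C D)
    {f g : (∀ i, π i) → ℝ≥0∞} (hf : Measurable f) (hg : Measurable g) :
    ∫⁻ x, safeDiv (condDens μ C D f x) (condDens μ C D g x) * g x ∂(Measure.pi μ)
      ≤ ∫⁻ x, g x ∂(Measure.pi μ) := by
  have hr := sd_measurable (condDens_meas μ C D hf) (condDens_meas μ C D hg)
  refine lintegral_le_of_lmarginal_le Dᶜ (hr.mul hg) hg ?_
  have hU : Dᶜ = C ∪ (C ∪ D)ᶜ := by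
    ext i
    have : i ∈ C → i ∉ D := fun h => Finset.disjoint_left.1 hCD h
    simp only [Finset.mem_compl, Finset.mem_union]
    tauto
  have hdis : Disjoint C (C ∪ D)ᶜ := by
    rw [Finset.disjoint_left]; intro i hi; simp [hi]
  have e1 : lmarginal μ Dᶜ f = lmarginal μ C (marginal μ (C ∪ D) f) := by
    rw [hU, lmarginal_union μ _ hf hdis]; rfl
  have hcD : ∀ (h : (∀ i, π i) → ℝ≥0∞) (x y : ∀ i, π i), (∀ i ∉ C, x i = y i) →
      marginal μ D h x = marginal μ D h y := fun h x y hxy =>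
    marginal_congr μ D h fun i hi => hxy i (Finset.disjoint_right.1 hCD hi)
  calc lmarginal μ Dᶜ (fun x => safeDiv (condDens μ C D f x) (condDens μ C D g x) * g x)
      = lmarginal μ C (lmarginal μ (C ∪ D)ᶜ
          (fun x => safeDiv (condDens μ C D f x) (condDens μ C D g x) * g x)) := by
        rw [hU]; exact lmarginal_union μ _ (hr.mul hg) hdis
    _ = lmarginal μ C (fun x => safeDiv (condDens μ C D f x) (condDens μ C D g x) *
          marginal μ (C ∪ D) g x) := by
        rw [lm_const_mul μ _ _ g hg]
        · rfl
        · intro x y h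
          have h' : ∀ i ∈ C ∪ D, x i = y i := fun i hi => h i (fun hn => Finset.mem_compl.1 hn hi)
          rw [condDens_congr μ C D f h', condDens_congr μ C D g h']
    _ ≤ lmarginal μ C (fun x => (safeDiv 1 (marginal μ D f x) * marginal μ D g x) *
          marginal μ (C ∪ D) f x) := by
        refine lmarginal_mono fun x => ?_
        refine (sd_cond _ _ _).trans (le_of_eq ?_)
        simp only [condDens, safeDiv]
        split_ifs
        · simp
        · rw [ENNReal.div_eq_inv_mul, one_div]; ring
    _ = fun x => (safeDiv 1 (marginal μ D f x) * marginal μ D g x) * marginal μ D f x := by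
        rw [lm_const_mul μ _ _ _ (marginal_meas μ _ hf), ← e1]
        · rfl
        · intro x y h
          rw [hcD f x y h, hcD g x y h]
    _ ≤ lmarginal μ Dᶜ g := by
        intro x
        calc _ = (safeDiv 1 (marginal μ D f x) * marginal μ D f x) * marginal μ D g x := by ring
          _ ≤ 1 * marginal μ D g x := mul_le_mul_left (sd_mul_le _ _) _
          _ = _ := one_mul _

lemma int_compLik (α : Sd d → ℝ) (β : Td d → ℝ)
    (hα : ∀ S, 0 ≤ α S) (hβ : ∀ T, 0 ≤ β T)
    (γ : ℝ) (hγ : γ = ∑ S, α S + ∑ T, β T) (hγpos : 0 < γ)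
    {f g : (∀ i, π i) → ℝ≥0∞} (hf : Measurable f) (hg : Measurable g)
    (hf1 : ∫⁻ x, f x ∂(Measure.pi μ) = 1) (hg1 : ∫⁻ x, g x ∂(Measure.pi μ) = 1) :
    ∫⁻ x, safeDiv (compLik μ α β γ f x) (compLik μ α β γ g x)
      ∂((Measure.pi μ).withDensity g) ≤ 1 := by
  let R : Sd d ⊕ Td d → (∀ i, π i) → ℝ≥0∞ := Sum.elim
    (fun S x => safeDiv (marginal μ S.1 f x) (marginal μ S.1 g x))
    (fun T x => safeDiv (condDens μ T.1.1 T.1.2 f x) (condDens μ T.1.1 T.1.2 g x))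
  let w : Sd d ⊕ Td d → ℝ := Sum.elim (fun S => α S / γ) (fun T => β T / γ)
  have hRm : ∀ i, Measurable (R i) := by
    rintro (S | T)
    · exact sd_measurable (marginal_meas μ _ hf) (marginal_meas μ _ hg)
    · exact sd_measurable (condDens_meas μ _ _ hf) (condDens_meas μ _ _ hg)
  have hw0 : ∀ i, 0 ≤ w i := by
    rintro (S | T)
    · exact div_nonneg (hα S) hγpos.le
    · exact div_nonneg (hβ T) hγpos.le
  have hw1 : ∑ i, w i = 1 := by
    rw [Fintype.sum_sum_type]
    simp only [w, Sum.elim_inl, Sum.elim_inr]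
    rw [← Finset.sum_div, ← Finset.sum_div, ← add_div, ← hγ, div_self hγpos.ne']
  have hR1 : ∀ i, ∫⁻ x, R i x ∂((Measure.pi μ).withDensity g) ≤ 1 := by
    intro i
    rw [lintegral_withDensity_eq_lintegral_mul _ hg (hRm i)]
    simp only [Pi.mul_apply, mul_comm (g _)]
    rcases i with S | T
    · exact (int_marg μ S.1 hf hg).trans hf1.le
    · exact (int_cond μ T.1.1 T.1.2 T.2.2.2 hf hg).trans hg1.le
  calc _ ≤ ∫⁻ x, ∏ i, R i x ^ w i ∂((Measure.pi μ).withDensity g) := by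
        refine lintegral_mono fun x => ?_
        rw [Fintype.prod_sum_type]
        refine (sd_mul _ _ _ _).trans (mul_le_mul' ?_ ?_)
        · refine (sd_prod _ _ _).trans (Finset.prod_le_prod' fun S _ => ?_)
          exact sd_rpow _ _ (hw0 (Sum.inl S))
        · refine (sd_prod _ _ _).trans (Finset.prod_le_prod' fun T _ => ?_)
          exact sd_rpow _ _ (hw0 (Sum.inr T))
    _ ≤ ∏ i, (∫⁻ x, R i x ∂((Measure.pi μ).withDensity g)) ^ w i :=
        ENNReal.lintegral_prod_norm_pow_le _ (fun i _ => (hRm i).aemeasurable) hw1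
          fun i _ => hw0 i
    _ ≤ 1 := Finset.prod_le_one' fun i _ => ENNReal.rpow_le_one (hR1 i) (hw0 i)

lemma marginal_joint {Θ : Type*} [MeasurableSpace Θ] {p : Θ → (∀ i, π i) → ℝ≥0∞}
    (hp : Measurable (Function.uncurry p)) (S : Finset (Fin d)) :
    Measurable fun z : Θ × (∀ i, π i) => marginal μ S (p z.1) z.2 := by
  unfold marginal lmarginal
  refine Measurable.lintegral_prod_right'
    (f := fun q : (Θ × (∀ i, π i)) × (∀ i : (Sᶜ : Finset (Fin d)), π i) =>
      p q.1.1 (Function.updateFinset q.1.2 Sᶜ q.2)) ?_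
  exact hp.comp ((measurable_fst.comp measurable_fst).prodMk
    (measurable_updateFinset'.comp ((measurable_snd.comp measurable_fst).prodMk measurable_snd)))

lemma compLik_joint {Θ : Type*} [MeasurableSpace Θ] {p : Θ → (∀ i, π i) → ℝ≥0∞}
    (hp : Measurable (Function.uncurry p)) (α : Sd d → ℝ) (β : Td d → ℝ) (γ : ℝ) :
    Measurable fun z : Θ × (∀ i, π i) => compLik μ α β γ (p z.1) z.2 := by
  unfold compLik
  refine Measurable.mul ?_ ?_
  · exact Finset.measurable_fun_prod _ fun S _ => (marginal_joint μ hp _).pow_const _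
  · exact Finset.measurable_fun_prod _ fun T _ =>
      (sd_measurable (marginal_joint μ hp _) (marginal_joint μ hp _)).pow_const _

lemma lintegral_pi_prod {n : ℕ} {E : Type*} [MeasurableSpace E] (ν : Measure E)
    [IsProbabilityMeasure ν] (h : E → ℝ≥0∞) (hh : Measurable h) :
    ∫⁻ x : Fin n → E, ∏ j, h (x j) ∂(Measure.pi fun _ => ν) = ∏ _j : Fin n, ∫⁻ x, h x ∂ν := by
  have hi : ProbabilityTheory.iIndepFun (fun (j : Fin n) (x : Fin n → E) => h (x j))
      (Measure.pi fun _ => ν) :=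
    ProbabilityTheory.iIndepFun_pi (X := fun _ => h) fun _ => hh.aemeasurable
  rw [ProbabilityTheory.lintegral_prod_eq_prod_lintegral_of_indepFun _ _ hi
    fun j => hh.comp (measurable_pi_apply j)]
  refine Finset.prod_congr rfl fun j _ => ?_
  exact (measurePreserving_eval (fun _ : Fin n => ν) j).lintegral_comp hh

lemma main_abs {E Θ Ω : Type*} [MeasurableSpace E] [MeasurableSpace Θ] [MeasurableSpace Ω]
    (ν : Measure E) [IsProbabilityMeasure ν] (c : Θ → E → ℝ≥0∞)
    (hc : Measurable fun z : Θ × E => c z.1 z.2) (θstar : Θ)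
    (hint : ∀ θ, ∫⁻ x, safeDiv (c θ x) (c θstar x) ∂ν ≤ 1)
    (Pr : Measure Ω) [IsProbabilityMeasure Pr] (n : ℕ) (X0 X1 : Fin n → Ω → E)
    (hX0 : ∀ j, Measurable (X0 j)) (hX1 : ∀ j, Measurable (X1 j))
    (hlaw : Measure.map (fun ω => (fun j => X0 j ω, fun j => X1 j ω)) Pr
      = (Measure.pi fun _ : Fin n => ν).prod (Measure.pi fun _ : Fin n => ν))
    (t1 : (Fin n → E) → Θ) (ht1 : Measurable t1)
    (a : ℝ) (ha0 : 0 < a) :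
    ENNReal.ofReal (1 - a) ≤
      Pr {ω | safeDiv
          (∏ j : Fin n, c (t1 fun j' => X1 j' ω) (X0 j ω))
          (∏ j : Fin n, c θstar (X0 j ω)) ≤ 1 / ENNReal.ofReal a} := by
  let h : Θ → E → ℝ≥0∞ := fun θ x => safeDiv (c θ x) (c θstar x)
  have hhm : Measurable fun z : Θ × E => h z.1 z.2 :=
    sd_measurable hc (hc.comp (measurable_const.prodMk measurable_snd))
  let G : (Fin n → E) × (Fin n → E) → ℝ≥0∞ := fun z => ∏ j, h (t1 z.2) (z.1 j)
  have hG : Measurable G := Finset.measurable_fun_prod _ fun j _ =>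
    hhm.comp ((ht1.comp measurable_snd).prodMk ((measurable_pi_apply j).comp measurable_fst))
  have hGi : ∫⁻ z, G z ∂((Measure.pi fun _ : Fin n => ν).prod (Measure.pi fun _ : Fin n => ν))
      ≤ 1 := by
    rw [lintegral_prod_symm' _ hG]
    calc _ ≤ ∫⁻ _y : Fin n → E, 1 ∂(Measure.pi fun _ : Fin n => ν) := by
          refine lintegral_mono fun y => ?_
          have := lintegral_pi_prod (n := n) ν (h (t1 y)) (hhm.comp measurable_prodMk_left)
          exact this.le.trans (Finset.prod_le_one' fun _ _ => hint _)
      _ = 1 := by simp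
  set A := {ω | safeDiv
          (∏ j : Fin n, c (t1 fun j' => X1 j' ω) (X0 j ω))
          (∏ j : Fin n, c θstar (X0 j ω)) ≤ 1 / ENNReal.ofReal a} with hA
  have hapos : ENNReal.ofReal a ≠ 0 := by simpa using ha0
  have hXm : Measurable (fun ω => ((fun j => X0 j ω, fun j => X1 j ω) :
      (Fin n → E) × (Fin n → E))) :=
    (measurable_pi_lambda _ hX0).prodMk (measurable_pi_lambda _ hX1)
  have hAc : Pr Aᶜ ≤ ENNReal.ofReal a := by
    calc Pr Aᶜ ≤ Pr ((fun ω => ((fun j => X0 j ω, fun j => X1 j ω) :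
          (Fin n → E) × (Fin n → E))) ⁻¹' {z | 1 / ENNReal.ofReal a ≤ G z}) := by
          refine measure_mono fun ω hω => ?_
          have hω' := not_le.1 (show ¬ (safeDiv (∏ j, c (t1 fun j' => X1 j' ω) (X0 j ω))
            (∏ j, c θstar (X0 j ω)) ≤ 1 / ENNReal.ofReal a) from hω)
          exact hω'.le.trans (sd_prod _ _ _)
      _ = _ := by
          rw [← Measure.map_apply hXm (measurableSet_le measurable_const hG), hlaw]
      _ ≤ _ := meas_ge_le_lintegral_div hG.aemeasurable (by simp) (by simpa using ha0)
      _ ≤ 1 / (1 / ENNReal.ofReal a) := ENNReal.div_le_div_right hGi _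
      _ = ENNReal.ofReal a := by simp
  have h1 : (1 : ℝ≥0∞) ≤ Pr A + Pr Aᶜ := by
    rw [← measure_univ (μ := Pr), ← Set.union_compl_self A]
    exact measure_union_le _ _
  rw [ENNReal.ofReal_sub _ ha0.le, ENNReal.ofReal_one]
  exact tsub_le_iff_right.2 (h1.trans (by gcongr))

end helpers

/-- The split-statistic universal confidence set is finite-sample
valid: for every `n ∈ ℕ` and every significance level `a ∈ (0,1)`,
`Pr_{θ*}(θ* ∈ C_n^a) ≥ 1 − a`, where `C_n^a = {θ ∈ Θ : U_{α,β,n}^0(θ) ≤ 1/a}`. -/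
theorem split_confidence_set_valid
    {d : ℕ} (hd : 1 ≤ d)
    {π : Fin d → Type*} [∀ i, MeasurableSpace (π i)]
    (μ : ∀ i, Measure (π i)) [∀ i, SigmaFinite (μ i)]
    {Θ : Type*} [MeasurableSpace Θ]
    (p : Θ → (∀ i, π i) → ℝ≥0∞)
    (hp_meas : Measurable (Function.uncurry p))
    (hp_prob : ∀ θ : Θ, ∫⁻ x, p θ x ∂(Measure.pi μ) = 1)
    (α : Sd d → ℝ) (β : Td d → ℝ)
    (hα : ∀ S, 0 ≤ α S) (hβ : ∀ T, 0 ≤ β T)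
    (γ : ℝ) (hγ : γ = ∑ S, α S + ∑ T, β T) (hγpos : 0 < γ)
    {Ω : Type*} [MeasurableSpace Ω]
    (Pr : Measure Ω) [IsProbabilityMeasure Pr]
    (θstar : Θ) (n : ℕ)
    -- the two halves `X_n^0` and `X_n^1` of the i.i.d. sample of size `2n`
    (X0 X1 : Fin n → Ω → (∀ i, π i))
    (hX0 : ∀ j, Measurable (X0 j)) (hX1 : ∀ j, Measurable (X1 j))
    -- the `2n` observations are i.i.d. with density `p(·;θ*)` w.r.t. `μ`
    (hlaw : Measure.map (fun ω => (fun j => X0 j ω, fun j => X1 j ω)) Pr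
      = (Measure.pi fun _ : Fin n => (Measure.pi μ).withDensity (p θstar)).prod
          (Measure.pi fun _ : Fin n => (Measure.pi μ).withDensity (p θstar)))
    -- the estimators `θ̃_n^0`, `θ̃_n^1` are measurable functions of `X_n^0`, `X_n^1` alone
    (t0 t1 : (Fin n → ∀ i, π i) → Θ)
    (ht0 : Measurable t0) (ht1 : Measurable t1)
    (a : ℝ) (ha0 : 0 < a) (ha1 : a < 1) :
    ENNReal.ofReal (1 - a) ≤
      Pr {ω | safeDiv
          (∏ j : Fin n, compLik μ α β γ (p (t1 fun j' => X1 j' ω)) (X0 j ω))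
          (∏ j : Fin n, compLik μ α β γ (p θstar) (X0 j ω)) ≤ 1 / ENNReal.ofReal a} := by
  have hpm : ∀ θ, Measurable (p θ) := fun θ => hp_meas.comp measurable_prodMk_left
  have : IsProbabilityMeasure ((Measure.pi μ).withDensity (p θstar)) := ⟨by
    rw [withDensity_apply _ MeasurableSet.univ, Measure.restrict_univ, hp_prob]⟩
  exact main_abs _ (fun θ => compLik μ α β γ (p θ)) (compLik_joint μ hp_meas α β γ) θstar
    (fun θ => int_compLik μ α β hα hβ γ hγ hγpos (hpm θ) (hpm θstar) (hp_prob θ) (hp_prob θstar))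
    Pr n X0 X1 hX0 hX1 hlaw t1 ht1 a ha0
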